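/- Let γ > 1 and 0 < α < 1. For every measurable set R ⊆ (0,1) that is symmetric (for all x ∈ (0,1), x ∈ R if and only if 1 − x ∈ R) and has Lebesgue measure α, the power of R against f₁ is at most the power of the extreme-tails region: ∫_R (1+γ)x^γ dx ≤ ∫_{E_α} (1+γ)x^γ dx. (For convex alternatives the extreme-tails test is the most powerful symmetric size-α test, and there the MLR and ALR tests coincide.) -/

import Mathlib

open MeasureTheory Set

lemma aux_sym (g : ℝ → ℝ) (S : Set ℝ) (hS : MeasurableSet S) (h : ∀ x, x ∈ S ↔ 1 - x ∈ S) :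
    ∫ x in S, g (1 - x) = ∫ x in S, g x := by
  rw [← integral_indicator hS, ← integral_indicator hS,
    ← integral_sub_left_eq_self (S.indicator g) volume 1]
  congr 1
  ext x
  by_cases hx : x ∈ S
  · rw [indicator_of_mem hx, indicator_of_mem ((h x).1 hx)]
  · rw [indicator_of_notMem hx, indicator_of_notMem (fun h' => hx ((h x).2 h'))]

theorem extreme_tails_most_powerful_convex (γ α : ℝ) (hγ : 1 < γ)
    (hα0 : 0 < α) (hα1 : α < 1) (R : Set ℝ)
    (hRmeas : MeasurableSet R) (hRsub : R ⊆ Ioo 0 1)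
    (hRsym : ∀ x ∈ Ioo (0:ℝ) 1, x ∈ R ↔ 1 - x ∈ R)
    (hRvol : volume R = ENNReal.ofReal α) :
    ∫ x in R, (1+γ) * x ^ γ ∂volume ≤
      ∫ x in Ioo (0:ℝ) (α/2) ∪ Ioo (1 - α/2) 1, (1+γ) * x ^ γ ∂volume := by
  set g : ℝ → ℝ := fun x => (1+γ) * x ^ γ with hg
  set E : Set ℝ := Ioo (0:ℝ) (α/2) ∪ Ioo (1 - α/2) 1 with hE
  have hEmeas : MeasurableSet E := measurableSet_Ioo.union measurableSet_Ioo
  have hEsub : E ⊆ Ioo 0 1 := by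
    rintro x (⟨h1, h2⟩ | ⟨h1, h2⟩) <;> constructor <;> linarith
  have hEsym : ∀ x, x ∈ E ↔ 1 - x ∈ E := by
    intro x
    simp only [hE, mem_union, mem_Ioo]
    constructor
    · rintro (⟨h1, h2⟩ | ⟨h1, h2⟩)
      · right; constructor <;> linarith
      · left; constructor <;> linarith
    · rintro (⟨h1, h2⟩ | ⟨h1, h2⟩)
      · right; constructor <;> linarith
      · left; constructor <;> linarith
  have hRsym' : ∀ x, x ∈ R ↔ 1 - x ∈ R := by
    intro x
    constructor
    · intro h; exact (hRsym x (hRsub h)).1 h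
    · intro h
      refine (hRsym x ?_).2 h
      have := hRsub h
      constructor <;> linarith [this.1, this.2]
  have hEvol : volume E = ENNReal.ofReal α := by
    rw [hE, measure_union _ measurableSet_Ioo, Real.volume_Ioo, Real.volume_Ioo,
      ← ENNReal.ofReal_add (by linarith) (by linarith)]
    · congr 1; ring
    · rw [Set.disjoint_left]
      rintro x ⟨_, h1⟩ ⟨h2, _⟩
      linarith
  have hgc : Continuous g := by
    have := Real.continuous_rpow_const (q := γ) (by linarith)
    exact continuous_const.mul this
  have hint : ∀ f : ℝ → ℝ, Continuous f → ∀ S ⊆ Ioo (0:ℝ) 1, IntegrableOn f S := by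
    intro f hf S hS
    exact (hf.continuousOn.integrableOn_Icc (a := 0) (b := 1)).mono_set
      (hS.trans Ioo_subset_Icc_self)
  have hgc' : Continuous fun x => g (1 - x) := hgc.comp (by fun_prop)
  set h : ℝ → ℝ := fun x => g x + g (1 - x) with hh
  have hhc : Continuous h := hgc.add hgc'
  have hsym : ∀ x, h (1 - x) = h x := by
    intro x; simp only [hh, sub_sub_cancel]; ring
  have hgconv : ConvexOn ℝ (Icc 0 1) g := by
    have := ((convexOn_rpow hγ.le).smul (c := 1 + γ) (by linarith)).subset
      Icc_subset_Ici_self (convex_Icc (0:ℝ) 1)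
    exact this
  have hconv : ConvexOn ℝ (Icc 0 1) h := by
    refine hgconv.add ⟨convex_Icc _ _, ?_⟩
    intro x hx y hy a b ha hb hab
    have := hgconv.2 (x := 1 - x) (y := 1 - y) ⟨by linarith [hx.2], by linarith [hx.1]⟩
      ⟨by linarith [hy.2], by linarith [hy.1]⟩ ha hb hab
    convert this using 2
    simp only [smul_eq_mul]
    linear_combination -hab
  have hmax : ∀ x ∈ Icc (0:ℝ) 1, ∀ z ∈ Icc x (1 - x), h z ≤ h x := by
    intro x hx z hz
    have := hconv.le_max_of_mem_Icc hx ⟨by linarith [hx.2], by linarith [hx.1]⟩ hz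
    rwa [hsym, max_self] at this
  set c := h (α/2) with hc
  have hin : ∀ x ∈ E, c ≤ h x := by
    rintro x (⟨h1, h2⟩ | ⟨h1, h2⟩)
    · exact hmax x ⟨by linarith, by linarith⟩ _ ⟨by linarith, by linarith⟩
    · rw [← hsym x]
      exact hmax (1 - x) ⟨by linarith, by linarith⟩ _ ⟨by linarith, by linarith⟩
  have hout : ∀ x ∈ Ioo (0:ℝ) 1, x ∉ E → h x ≤ c := by
    intro x hx hxE
    refine hmax (α/2) ⟨by linarith, by linarith⟩ x ⟨?_, ?_⟩
    · by_contra hlt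
      exact hxE (Or.inl ⟨hx.1, by linarith⟩)
    · by_contra hlt
      exact hxE (Or.inr ⟨by linarith, hx.2⟩)
  have key : ∫ x in R, (h x - c) ≤ ∫ x in E, (h x - c) := by
    rw [← integral_indicator hRmeas, ← integral_indicator hEmeas]
    have hc' : Continuous fun x => h x - c := hhc.sub continuous_const
    refine integral_mono ((integrable_indicator_iff hRmeas).2 (hint _ hc' R hRsub))
      ((integrable_indicator_iff hEmeas).2 (hint _ hc' E hEsub)) ?_
    intro x
    by_cases hxE : x ∈ E <;> by_cases hxR : x ∈ R <;> simp only [indicator, hxE, hxR, if_true, if_false, le_refl]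
    · linarith [hin x hxE]
    · linarith [hout x (hRsub hxR) hxE]
  have hval : ∀ S ⊆ Ioo (0:ℝ) 1, MeasurableSet S → (∀ x, x ∈ S ↔ 1 - x ∈ S) →
      volume S = ENNReal.ofReal α →
      ∫ x in S, (h x - c) = 2 * (∫ x in S, g x) - α * c := by
    intro S hS hSm hSs hSv
    rw [integral_sub (hint _ hhc S hS) (hint _ continuous_const S hS), setIntegral_const,
      hh, integral_add (hint _ hgc S hS) (hint _ hgc' S hS), aux_sym g S hSm hSs,
      measureReal_def, hSv, ENNReal.toReal_ofReal hα0.le, smul_eq_mul]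
    ring
  rw [hval R hRsub hRmeas hRsym' hRvol, hval E hEsub hEmeas hEsym hEvol] at key
  linarith
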